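/- There exists a compact subset E of ℝ^d such that E has Hausdorff dimension d and such that for every Borel measure μ on ℝ^d with μ(E) > 0, every p ∈ (1,2] and every q ∈ [1,∞], the supremum over nonzero Schwartz functions f of ‖f̂‖_{L^q(μ)} / ‖f‖_{L^p(ℝ^d)} is infinite. -/

import Mathlib

open MeasureTheory
open scoped FourierTransform ENNReal NNReal

/-- Position of the `j`-th free binary digit. -/
def sg (j : ℕ) : ℕ := j + 1 + 3 * Nat.sqrt j

/-- The parametrization of the Cantor-like set. -/
noncomputable def AA (a : ℕ → Fin 2) : ℝ := ∑' i, ((a i : ℕ) : ℝ) * (1/2 : ℝ) ^ sg i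

lemma sg_mono {i j : ℕ} (h : i ≤ j) : sg i + (j - i) ≤ sg j := by
  have := Nat.sqrt_le_sqrt h
  unfold sg
  omega

lemma half_pow_le {m n : ℕ} (h : m ≤ n) : (1/2 : ℝ) ^ n ≤ (1/2 : ℝ) ^ m :=
  pow_le_pow_of_le_one (by norm_num) (by norm_num) h

lemma fin2_le (x : Fin 2) : ((x : ℕ) : ℝ) ≤ 1 := by
  have : (x : ℕ) ≤ 1 := by omega
  exact_mod_cast this

lemma AA_term_nonneg (a : ℕ → Fin 2) (i : ℕ) : 0 ≤ ((a i : ℕ) : ℝ) * (1/2 : ℝ) ^ sg i := by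
  positivity

lemma AA_term_le (a : ℕ → Fin 2) (i : ℕ) :
    ((a i : ℕ) : ℝ) * (1/2 : ℝ) ^ sg i ≤ (1/2 : ℝ) ^ i := by
  calc ((a i : ℕ) : ℝ) * (1/2 : ℝ) ^ sg i ≤ 1 * (1/2 : ℝ) ^ sg i := by
        gcongr; exact fin2_le _
    _ = (1/2 : ℝ) ^ sg i := one_mul _
    _ ≤ _ := half_pow_le (by unfold sg; omega)

lemma AA_summable (a : ℕ → Fin 2) : Summable fun i => ((a i : ℕ) : ℝ) * (1/2 : ℝ) ^ sg i :=
  Summable.of_nonneg_of_le (AA_term_nonneg a) (AA_term_le a) summable_geometric_two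

lemma AA_continuous : Continuous AA := by
  unfold AA
  refine continuous_tsum (u := fun i : ℕ => (1/2 : ℝ) ^ i) ?_ summable_geometric_two ?_
  · intro i
    have h : Continuous fun x : Fin 2 => ((x : ℕ) : ℝ) := continuous_of_discreteTopology
    exact (h.comp (continuous_apply i)).mul continuous_const
  · intro i a
    rw [Real.norm_of_nonneg (AA_term_nonneg a i)]
    exact AA_term_le a i

lemma AA_lower_aux (a b : ℕ → Fin 2) (j : ℕ) (h : ∀ i < j, a i = b i) (ha : a j = 1)
    (hb : b j = 0) :
    (1/2 : ℝ) ^ (Nat.sqrt j ^ 2 + 5 * Nat.sqrt j + 3) ≤ AA a - AA b := by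
  set r := Nat.sqrt j with hr
  have hj : j < (r + 1) ^ 2 := by
    have := Nat.lt_succ_sqrt j
    rw [pow_two]; exact this
  have hsg : sg ((r+1)^2) = (r+1)^2 + 1 + 3 * (r+1) := by
    unfold sg; rw [Nat.sqrt_eq']
  have hsj : sg j = j + 1 + 3 * r := rfl
  let D : ℕ → ℝ := fun i => ((a i : ℕ) : ℝ) * (1/2 : ℝ) ^ sg i - ((b i : ℕ) : ℝ) * (1/2 : ℝ) ^ sg i
  have hD : Summable D := (AA_summable a).sub (AA_summable b)
  have e1 : AA a - AA b = ∑' i, D i := ((AA_summable a).tsum_sub (AA_summable b)).symm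
  have e2 : ∑ i ∈ Finset.range (j+1), D i = (1/2 : ℝ) ^ sg j := by
    rw [Finset.sum_range_succ, Finset.sum_eq_zero]
    · simp [D, ha, hb]
    · intro i hi
      simp [D, h i (Finset.mem_range.1 hi)]
  have e3 : HasSum (fun i : ℕ => (1/2 : ℝ) ^ (sg j + 1 + i)) ((1/2 : ℝ) ^ sg j) := by
    have := hasSum_geometric_two.mul_left ((1/2 : ℝ) ^ (sg j + 1))
    simp only [← pow_add] at this
    rwa [show (1/2 : ℝ) ^ (sg j + 1) * 2 = (1/2 : ℝ) ^ sg j by rw [pow_succ]; ring] at this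
  have hD' : Summable fun i => D (i + (j+1)) := (summable_nat_add_iff (j+1)).2 hD
  have e4 := hD.sum_add_tsum_nat_add (j+1)
  have e5 := e3.summable.tsum_add hD'
  rw [e3.tsum_eq] at e5
  have hDlow : ∀ i, -(1/2 : ℝ) ^ sg i ≤ D i := by
    intro i
    have h1 := AA_term_nonneg a i
    have h2 : ((b i : ℕ) : ℝ) * (1/2 : ℝ) ^ sg i ≤ 1 * (1/2 : ℝ) ^ sg i := by
      gcongr; exact fin2_le _
    simp only [D]; linarith
  have nn : ∀ i : ℕ, 0 ≤ (1/2 : ℝ) ^ (sg j + 1 + i) + D (i + (j+1)) := by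
    intro i
    have h1 := hDlow (i + (j+1))
    have h2 : (1/2 : ℝ) ^ sg (i + (j+1)) ≤ (1/2 : ℝ) ^ (sg j + 1 + i) := by
      apply half_pow_le
      have := sg_mono (i := j) (j := i + (j+1)) (by omega)
      omega
    linarith
  have e6 := (e3.summable.add hD').le_tsum ((r+1)^2 - (j+1)) (fun i _ => nn i)
  have e7 : (r+1)^2 - (j+1) + (j+1) = (r+1)^2 := by omega
  have e8 : sg j + 1 + ((r+1)^2 - (j+1)) = (r+1)^2 + 1 + 3 * r := by omega
  rw [e7, e8] at e6
  have h1 := hDlow ((r+1)^2)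
  rw [hsg, show (r+1)^2 + 1 + 3 * (r+1) = (r+1)^2 + 1 + 3 * r + 3 by ring, pow_add _ _ 3] at h1
  have h2 : (1/2 : ℝ) ^ (r ^ 2 + 5 * r + 3) = (1/2 : ℝ) ^ ((r+1)^2 + 1 + 3 * r) * (1/2) := by
    rw [← pow_succ]; congr 1; ring
  have h3 : (0:ℝ) < (1/2 : ℝ) ^ ((r+1)^2 + 1 + 3 * r) := by positivity
  rw [h2, e1, ← e4, e2]
  linarith

lemma AA_lower (a b : ℕ → Fin 2) (j : ℕ) (h : ∀ i < j, a i = b i) (hab : a j ≠ b j) :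
    (1/2 : ℝ) ^ (Nat.sqrt j ^ 2 + 5 * Nat.sqrt j + 3) ≤ |AA a - AA b| := by
  have : (a j = 1 ∧ b j = 0) ∨ (b j = 1 ∧ a j = 0) := by
    generalize a j = x at *
    generalize b j = y at *
    revert hab; revert x y; decide
  rcases this with ⟨h1, h2⟩ | ⟨h1, h2⟩
  · exact (AA_lower_aux a b j h h1 h2).trans (le_abs_self _)
  · rw [abs_sub_comm]
    exact (AA_lower_aux b a j (fun i hi => (h i hi).symm) h1 h2).trans (le_abs_self _)

/-- Exponents of the frequencies. -/
def ex (k : ℕ) : ℕ := (k + 1) ^ 2 + 3 * k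

lemma AA_frac (a : ℕ → Fin 2) (k : ℕ) :
    ∃ z : ℕ, ∃ t : ℝ, 0 ≤ t ∧ t ≤ 1/8 ∧ (2 : ℝ) ^ ex k * AA a = z + t := by
  have hs := AA_summable a
  have e4 := hs.sum_add_tsum_nat_add ((k+1)^2)
  refine ⟨∑ i ∈ Finset.range ((k+1)^2), (a i : ℕ) * 2 ^ (ex k - sg i),
    (2 : ℝ) ^ ex k * ∑' i, ((a (i + (k+1)^2) : ℕ) : ℝ) * (1/2 : ℝ) ^ sg (i + (k+1)^2), ?_, ?_, ?_⟩
  · have : 0 ≤ ∑' i, ((a (i + (k+1)^2) : ℕ) : ℝ) * (1/2 : ℝ) ^ sg (i + (k+1)^2) :=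
      tsum_nonneg fun i => AA_term_nonneg a _
    positivity
  · have e3 : HasSum (fun i : ℕ => (1/2 : ℝ) ^ (ex k + 4 + i)) ((1/2 : ℝ) ^ (ex k + 3)) := by
      have := hasSum_geometric_two.mul_left ((1/2 : ℝ) ^ (ex k + 4))
      simp only [← pow_add] at this
      rwa [show (1/2 : ℝ) ^ (ex k + 4) * 2 = (1/2 : ℝ) ^ (ex k + 3) by
        rw [pow_succ _ (ex k + 3)]; ring] at this
    have hle : ∑' i, ((a (i + (k+1)^2) : ℕ) : ℝ) * (1/2 : ℝ) ^ sg (i + (k+1)^2)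
        ≤ (1/2 : ℝ) ^ (ex k + 3) := by
      rw [← e3.tsum_eq]
      have hs' : Summable fun i : ℕ =>
          ((a (i + (k+1)^2) : ℕ) : ℝ) * (1/2 : ℝ) ^ sg (i + (k+1)^2) :=
        (summable_nat_add_iff (f := fun i => ((a i : ℕ) : ℝ) * (1/2 : ℝ) ^ sg i) ((k+1)^2)).2 hs
      refine hs'.tsum_le_tsum (fun i => ?_) e3.summable
      refine (mul_le_of_le_one_left (by positivity) (fin2_le _)).trans (half_pow_le ?_)
      · have h1 := sg_mono (i := (k+1)^2) (j := i + (k+1)^2) (by omega)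
        have hsg : sg ((k+1)^2) = (k+1)^2 + 1 + 3 * (k+1) := by
          unfold sg; rw [Nat.sqrt_eq']
        unfold ex; omega
    calc _ ≤ (2 : ℝ) ^ ex k * (1/2 : ℝ) ^ (ex k + 3) := by gcongr
      _ = ((2 : ℝ) * (1/2)) ^ ex k * (1/2) ^ 3 := by rw [mul_pow, pow_add]; ring
      _ = 1/8 := by norm_num
  · have : AA a = ∑' i, ((a i : ℕ) : ℝ) * (1/2 : ℝ) ^ sg i := rfl
    rw [this, ← e4, mul_add, Finset.mul_sum]
    congr 1
    push_cast
    refine Finset.sum_congr rfl fun i hi => ?_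
    have hi := Finset.mem_range.1 hi
    have hsq : Nat.sqrt i < k + 1 := Nat.sqrt_lt'.2 hi
    have hle : sg i ≤ ex k := by unfold sg ex; omega
    obtain ⟨c, hc⟩ := Nat.exists_eq_add_of_le hle
    rw [hc, Nat.add_sub_cancel_left, pow_add]
    have : (2:ℝ) ^ sg i * (1/2) ^ sg i = 1 := by rw [← mul_pow]; norm_num
    calc _ = ((2:ℝ) ^ sg i * (1/2) ^ sg i) * ((a i : ℕ) * 2 ^ c) := by ring
      _ = _ := by rw [this, one_mul]

lemma BA_holder (s : ℝ≥0) (hs0 : 0 < s) (hs : s < 1) : ∃ C : ℝ≥0, ∀ a b : ℕ → Fin 2,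
    edist (Real.ofDigits a) (Real.ofDigits b) ≤ (C : ℝ≥0∞) * edist (AA a) (AA b) ^ (s : ℝ) := by
  have hs1 : (0:ℝ) < 1 - s := by
    have : (s:ℝ) < 1 := by exact_mod_cast hs
    linarith
  set c : ℝ := 3 + 25 / (4 * (1 - s)) with hc
  refine ⟨(2 : ℝ≥0) ^ c, fun a b => ?_⟩
  by_cases hab : a = b
  · subst hab; simp
  have hex : ∃ j, a j ≠ b j := by
    by_contra hcon; push Not at hcon; exact hab (funext hcon)
  classical
  set j := Nat.find hex with hj
  have hj1 : a j ≠ b j := Nat.find_spec hex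
  have hj2 : ∀ i < j, a i = b i := fun i hi => by
    have := Nat.find_min hex hi; push Not at this; exact this
  have hA := AA_lower a b j hj2 hj1
  have hB := Real.abs_ofDigits_sub_ofDigits_le hj2
  set r := Nat.sqrt j with hr
  have hrj : r ^ 2 ≤ j := Nat.sqrt_le' j
  have key : |Real.ofDigits a - Real.ofDigits b| ≤ (2:ℝ) ^ c * |AA a - AA b| ^ (s:ℝ) := by
    calc |Real.ofDigits a - Real.ofDigits b| ≤ ((2:ℕ):ℝ) ^ (-((j:ℕ):ℝ)) := by
          rw [Real.rpow_neg (by norm_num), Real.rpow_natCast]; exact hB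
      _ = (2:ℝ) ^ (-((j:ℕ):ℝ)) := by norm_num
      _ ≤ (2:ℝ) ^ (c + (-((r ^ 2 + 5 * r + 3 : ℕ) : ℝ)) * s) := by
          apply Real.rpow_le_rpow_of_exponent_le (by norm_num)
          have h1 : ((r:ℝ)) ^ 2 ≤ j := by exact_mod_cast hrj
          have h2 : 5 * (r:ℝ) ≤ (1 - s) * (r:ℝ) ^ 2 + 25 / (4 * (1 - s)) := by
            have : (1 - s) * (r:ℝ) ^ 2 + 25 / (4 * (1 - s)) - 5 * (r:ℝ)
              = (2 * (1-s) * r - 5) ^ 2 / (4 * (1 - s)) := by field_simp; ring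
            have h3 : 0 ≤ (2 * (1-s) * r - 5 : ℝ) ^ 2 / (4 * (1 - s)) := by positivity
            linarith
          have h4 : (5 * (r:ℝ) + 3) * s ≤ 5 * (r:ℝ) + 3 :=
            mul_le_of_le_one_right (by positivity) (by linarith)
          push_cast
          rw [hc]
          nlinarith
      _ = (2:ℝ) ^ c * ((1/2 : ℝ) ^ (r ^ 2 + 5 * r + 3)) ^ (s:ℝ) := by
          rw [Real.rpow_add (by norm_num), Real.rpow_mul (by norm_num),
            Real.rpow_neg (by norm_num), Real.rpow_natCast]
          congr 2
          rw [one_div, inv_pow]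
      _ ≤ _ := by gcongr
  rw [edist_dist, edist_dist, Real.dist_eq, Real.dist_eq, ENNReal.ofReal_rpow_of_nonneg (abs_nonneg _)
    (by positivity)]
  have : (((2 : ℝ≥0) ^ c : ℝ≥0) : ℝ≥0∞) = ENNReal.ofReal ((2:ℝ) ^ c) := by
    rw [ENNReal.ofReal, Real.toNNReal_rpow_of_nonneg (by norm_num)]
    simp
  rw [this, ← ENNReal.ofReal_mul (by positivity)]
  exact ENNReal.ofReal_le_ofReal key

/-- The Cantor-like set. -/
def E1 : Set ℝ := Set.range AA

lemma E1_compact : IsCompact E1 := isCompact_range AA_continuous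

/-- The set in product form. -/
def EP (d : ℕ) : Set (Fin d → ℝ) := Set.univ.pi fun _ => E1

lemma EP_compact (d : ℕ) : IsCompact (EP d) := isCompact_univ_pi fun _ => E1_compact

lemma EP_dim_le (d : ℕ) (s : ℝ≥0) (hs0 : 0 < s) (hs : s < 1) :
    (d : ℝ≥0∞) ≤ dimH (EP d) / s := by
  obtain ⟨C, hC⟩ := BA_holder s hs0 hs
  let Φ : (Fin d → ℝ) → (Fin d → ℝ) := fun x i => Real.ofDigits (Function.invFun AA (x i))
  have hΦ : HolderOnWith C s Φ (EP d) := by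
    intro x hx y hy
    refine edist_pi_le_iff.2 fun i => ?_
    have h1 := hC (Function.invFun AA (x i)) (Function.invFun AA (y i))
    rw [Function.invFun_eq (hx i trivial), Function.invFun_eq (hy i trivial)] at h1
    refine h1.trans ?_
    gcongr
    exact edist_le_pi_edist x y i
  have h2 := hΦ.dimH_image_le hs0
  refine le_trans ?_ h2
  have hsub : (Set.univ.pi fun _ => Set.Icc 0 1 : Set (Fin d → ℝ)) ⊆ Φ '' EP d := by
    intro y hy
    have hy' : ∀ i, ∃ a : ℕ → Fin 2, Real.ofDigits a = y i := fun i => by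
      obtain ⟨a, -, ha⟩ := Real.ofDigits_SurjOn (b := 2) (by norm_num) (hy i trivial)
      exact ⟨a, ha⟩
    choose a ha using hy'
    refine ⟨fun i => AA (a i), fun i _ => ⟨a i, rfl⟩, ?_⟩
    funext i
    have h1 := hC (Function.invFun AA (AA (a i))) (a i)
    rw [Function.invFun_eq (f := AA) ⟨a i, rfl⟩, edist_self, ENNReal.zero_rpow_of_pos (by exact_mod_cast hs0),
      mul_zero, nonpos_iff_eq_zero, edist_eq_zero, ha] at h1
    exact h1
  have : dimH (Set.univ.pi fun _ => Set.Icc 0 1 : Set (Fin d → ℝ)) = d := by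
    rw [Real.dimH_of_nonempty_interior]
    · simp
    · rw [interior_pi_set Set.finite_univ]
      refine ⟨fun _ => 1/2, fun i _ => ?_⟩
      simp only [interior_Icc]; norm_num
  rw [← this]
  exact dimH_mono hsub

lemma EP_dim (d : ℕ) : dimH (EP d) = d := by
  refine le_antisymm ?_ ?_
  · calc dimH (EP d) ≤ dimH (Set.univ : Set (Fin d → ℝ)) := dimH_mono (Set.subset_univ _)
      _ = d := Real.dimH_univ_pi_fin d
  · have h : ∀ s : ℝ≥0, 0 < s → s < 1 → (d : ℝ≥0∞) * s ≤ dimH (EP d) := fun s h0 h1 => by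
      have := EP_dim_le d s h0 h1
      rwa [ENNReal.le_div_iff_mul_le (Or.inl (by exact_mod_cast h0.ne')) (Or.inl (by simp))] at this
    have hfin : dimH (EP d) ≠ ⊤ := Real.dimH_ne_top _
    lift dimH (EP d) to ℝ≥0 using hfin with D
    have h' : ∀ s : ℝ≥0, 0 < s → s < 1 → (d : ℝ≥0) * s ≤ D := fun s h0 h1 => by
      exact_mod_cast h s h0 h1
    have h3 : (d : ℝ≥0) ≤ D := by
      have ht : Filter.Tendsto (fun s : ℝ≥0 => (d : ℝ≥0) * s) (nhdsWithin 1 (Set.Iio 1))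
          (nhds ((d : ℝ≥0) * 1)) :=
        ((continuous_const.mul continuous_id).tendsto 1).mono_left nhdsWithin_le_nhds
      rw [mul_one] at ht
      have : (nhdsWithin (1 : ℝ≥0) (Set.Iio 1)).NeBot := nhdsLT_neBot_of_exists_lt ⟨0, one_pos⟩
      refine le_of_tendsto ht ?_
      filter_upwards [Ioo_mem_nhdsLT (zero_lt_one : (0:ℝ≥0) < 1)] with s hs
      exact h' s hs.1 hs.2
    exact_mod_cast h3

/-- Sum of translates of a function. -/
noncomputable def trSum {V : Type*} [AddCommGroup V] (g : V → ℂ) (v : ℕ → V) (K : ℕ) : V → ℂ :=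
  fun x => ∑ k ∈ Finset.range K, g (x + v k)

lemma trSum_fourier {V : Type*} [NormedAddCommGroup V] [InnerProductSpace ℝ V]
    [FiniteDimensional ℝ V] [MeasurableSpace V] [BorelSpace V] (g : V → ℂ) (hg : Integrable g)
    (v : ℕ → V) (K : ℕ) (ξ : V) :
    𝓕 (trSum g v K) ξ = (∑ k ∈ Finset.range K,
      Complex.exp ((2 * Real.pi * inner ℝ (v k) ξ : ℝ) * Complex.I)) * 𝓕 g ξ := by
  have h1 : ∀ k, 𝓕 (fun x => g (x + v k)) ξ =
      Complex.exp ((2 * Real.pi * inner ℝ (v k) ξ : ℝ) * Complex.I) * 𝓕 g ξ := by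
    intro k
    have := congrFun (VectorFourier.fourierIntegral_comp_add_right Real.fourierChar
      (volume : Measure V) (innerₗ V) g (v k)) ξ
    rw [Circle.smul_def, Real.fourierChar_apply] at this
    exact this
  have h2 : 𝓕 (trSum g v K) ξ = ∑ k ∈ Finset.range K, 𝓕 (fun x => g (x + v k)) ξ := by
    simp only [Real.fourier_eq, trSum, Finset.smul_sum]
    rw [integral_finsetSum]
    intro k _
    exact (Real.fourierIntegral_convergent_iff ξ).2 (hg.comp_add_right (v k))
  rw [h2, Finset.sum_mul]
  exact Finset.sum_congr rfl fun k _ => h1 k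

lemma trSum_eLpNorm {V : Type*} [NormedAddCommGroup V] [InnerProductSpace ℝ V]
    [FiniteDimensional ℝ V] [MeasurableSpace V] [BorelSpace V] (g : V → ℂ) (hg : Continuous g)
    (v : ℕ → V) (K : ℕ) (hdisj : ∀ x k l, g (x + v k) ≠ 0 → g (x + v l) ≠ 0 → k = l)
    (p : ℝ≥0∞) (hp : p ≠ 0) (hp' : p ≠ ⊤) :
    eLpNorm (trSum g v K) p volume ≤ (K : ℝ≥0∞) ^ (1 / p.toReal) * eLpNorm g p volume := by
  have hpp : 0 < p.toReal := ENNReal.toReal_pos hp hp'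
  rw [eLpNorm_eq_lintegral_rpow_enorm_toReal hp hp', eLpNorm_eq_lintegral_rpow_enorm_toReal hp hp',
    ← ENNReal.mul_rpow_of_nonneg _ _ (by positivity)]
  gcongr
  calc ∫⁻ x, ‖trSum g v K x‖ₑ ^ p.toReal
      ≤ ∫⁻ x, ∑ k ∈ Finset.range K, ‖g (x + v k)‖ₑ ^ p.toReal := by
        refine lintegral_mono fun x => ?_
        by_cases h : ∃ k ∈ Finset.range K, g (x + v k) ≠ 0
        · obtain ⟨k, hk, hgk⟩ := h
          have : trSum g v K x = g (x + v k) := by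
            refine Finset.sum_eq_single_of_mem k hk fun l _ hl => ?_
            by_contra hcon
            exact hl (hdisj x l k hcon hgk)
          simp only [this]
          exact Finset.single_le_sum (f := fun k => ‖g (x + v k)‖ₑ ^ p.toReal)
            (fun _ _ => bot_le) hk
        · push Not at h
          have : trSum g v K x = 0 := Finset.sum_eq_zero h
          simp [this, hpp]
    _ = ∑ k ∈ Finset.range K, ∫⁻ x, ‖g (x + v k)‖ₑ ^ p.toReal := by
        refine lintegral_finsetSum _ fun k _ => ?_
        have : Continuous fun x => g (x + v k) := by fun_prop
        exact this.measurable.enorm.pow_const _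
    _ = ∑ k ∈ Finset.range K, ∫⁻ x, ‖g x‖ₑ ^ p.toReal := by
        refine Finset.sum_congr rfl fun k _ => ?_
        exact lintegral_add_right_eq_self (fun x => ‖g x‖ₑ ^ p.toReal) (v k)
    _ = K * ∫⁻ x, ‖g x‖ₑ ^ p.toReal := by simp

lemma half_le_cos {x : ℝ} (h : |x| ≤ 1) : 1/2 ≤ Real.cos x := by
  have := Real.one_sub_sq_div_two_le_cos (x := x)
  have h2 : x ^ 2 ≤ 1 := by rw [← sq_abs]; nlinarith [abs_nonneg x]
  linarith

/-- existence of a suitable bump -/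
lemma exists_bump {V : Type*} [NormedAddCommGroup V] [InnerProductSpace ℝ V]
    [FiniteDimensional ℝ V] [MeasurableSpace V] [BorelSpace V] (R : ℝ) (hR : 0 < R) :
    ∃ g : V → ℂ, ContDiff ℝ (⊤ : ℕ∞) g ∧ HasCompactSupport g ∧ (∀ x, g x ≠ 0 → ‖x‖ < 1/2) ∧
      ∃ c : ℝ, 0 < c ∧ ∀ ξ : V, ‖ξ‖ ≤ R → c ≤ ‖𝓕 g ξ‖ := by
  obtain ⟨ρ, hρ, hρ2, hρR⟩ : ∃ ρ : ℝ, 0 < ρ ∧ ρ ≤ 1/2 ∧ 2 * Real.pi * ρ * R ≤ 1 := by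
    refine ⟨min (1/2) (1 / (2 * Real.pi * R)), by positivity, min_le_left _ _, ?_⟩
    have h1 : min (1/2) (1 / (2 * Real.pi * R)) ≤ 1 / (2 * Real.pi * R) := min_le_right _ _
    rw [le_div_iff₀ (by positivity)] at h1
    linarith
  let φ : ContDiffBump (0 : V) := ⟨ρ / 2, ρ, by positivity, by linarith⟩
  have hsupp : ∀ x, φ x ≠ 0 → ‖x‖ < ρ := by
    intro x hx
    have : x ∈ Function.support φ := hx
    rw [φ.support_eq] at this
    simpa [φ] using this
  have hint : Integrable (φ : V → ℝ) := φ.integrable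
  refine ⟨fun x => (φ x : ℂ), Complex.ofRealCLM.contDiff.comp φ.contDiff, ?_, ?_,
    (1/2) * ∫ x, φ x, ?_, ?_⟩
  · exact φ.hasCompactSupport.comp_left (g := fun x : ℝ => (x : ℂ)) (by simp)
  · intro x hx
    have := hsupp x (by simpa using hx)
    linarith
  · have := φ.integral_pos (μ := volume)
    positivity
  · intro ξ hξ
    refine le_trans ?_ (Complex.re_le_norm _)
    rw [Real.fourier_eq']
    have hi : Integrable fun x : V => Complex.exp ((↑(-2 * Real.pi * inner ℝ x ξ) * Complex.I))
        • (φ x : ℂ) := by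
      have := (Real.fourierIntegral_convergent_iff (V := V) (μ := volume) ξ).2 (hint.ofReal (𝕜 := ℂ))
      simpa [Circle.smul_def, Real.fourierChar_apply] using this
    have h1 : (∫ x : V, Complex.exp ((↑(-2 * Real.pi * inner ℝ x ξ) * Complex.I))
        • (φ x : ℂ)).re = ∫ x : V, (Complex.exp ((↑(-2 * Real.pi * inner ℝ x ξ) * Complex.I))
        • (φ x : ℂ)).re := (integral_re hi).symm
    rw [h1, ← integral_const_mul]
    refine integral_mono (hint.const_mul _) hi.re fun x => ?_
    have h2 : (Complex.exp ((↑(-2 * Real.pi * inner ℝ x ξ) * Complex.I)) • (φ x : ℂ)).re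
        = Real.cos (-2 * Real.pi * inner ℝ x ξ) * φ x := by
      rw [smul_eq_mul, Complex.re_mul_ofReal, Complex.exp_ofReal_mul_I_re]
    simp only [h2]
    by_cases hx : φ x = 0
    · simp [hx]
    gcongr
    · exact φ.nonneg
    apply half_le_cos
    have h3 := hsupp x hx
    have h4 := abs_real_inner_le_norm x ξ
    rw [abs_mul, show |-2 * Real.pi| = 2 * Real.pi by
      rw [abs_of_neg] <;> nlinarith [Real.pi_pos]]
    calc 2 * Real.pi * |inner ℝ x ξ| ≤ 2 * Real.pi * (ρ * R) := by
          gcongr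
          exact h4.trans (by gcongr)
      _ ≤ 1 := by linarith

lemma exp_sum_lower {n : ℕ → ℝ} (h : ∀ k, ∃ z : ℕ, ∃ t : ℝ, 0 ≤ t ∧ t ≤ 1/8 ∧ n k = z + t) (K : ℕ) :
    (K : ℝ) / 2 ≤ ‖∑ k ∈ Finset.range K, Complex.exp ((2 * Real.pi * n k : ℝ) * Complex.I)‖ := by
  refine le_trans ?_ (Complex.re_le_norm _)
  rw [Complex.re_sum]
  have : ∀ k ∈ Finset.range K, (1/2 : ℝ) ≤
      (Complex.exp ((2 * Real.pi * n k : ℝ) * Complex.I)).re := by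
    intro k _
    rw [Complex.exp_ofReal_mul_I_re]
    obtain ⟨z, t, h0, h1, h2⟩ := h k
    rw [h2, show 2 * Real.pi * (z + t) = 2 * Real.pi * t + z * (2 * Real.pi) by ring,
      Real.cos_add_nat_mul_two_pi]
    apply half_le_cos
    rw [abs_of_nonneg (by positivity)]
    nlinarith [Real.pi_lt_four, Real.pi_pos]
  have := Finset.sum_le_sum this
  simp at this
  simp
  linarith

lemma no_restriction {d : ℕ} (i0 : Fin d) (E : Set (EuclideanSpace ℝ (Fin d))) (hEm : MeasurableSet E)
    (R : ℝ) (hR : 0 < R) (hER : ∀ ξ ∈ E, ‖ξ‖ ≤ R) (N : ℕ → ℕ) (hN : Function.Injective N)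
    (hE : ∀ ξ ∈ E, ∀ k, ∃ z : ℕ, ∃ t : ℝ, 0 ≤ t ∧ t ≤ 1/8 ∧ (N k : ℝ) * ξ i0 = z + t)
    (μ : Measure (EuclideanSpace ℝ (Fin d))) (hμ : 0 < μ E) (p q : ℝ≥0∞) (hp : 1 < p) (hp2 : p ≤ 2)
    (hq : 1 ≤ q) :
    ¬ ∃ C : ℝ≥0, ∀ f : SchwartzMap (EuclideanSpace ℝ (Fin d)) ℂ,
            eLpNorm (𝓕 ⇑f) q μ ≤ (C : ℝ≥0∞) * eLpNorm (⇑f) p volume := by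
  rintro ⟨C, hC⟩
  obtain ⟨g, hg, hgc, hgs, c, hc, hgF⟩ := exists_bump (V := EuclideanSpace ℝ (Fin d)) R hR
  have hpt : p ≠ ⊤ := (hp2.trans_lt (by simp)).ne
  have hp0 : p ≠ 0 := (zero_lt_one.trans hp).ne'
  let v : ℕ → EuclideanSpace ℝ (Fin d) := fun k => EuclideanSpace.single i0 (N k : ℝ)
  have hdisj : ∀ x k l, g (x + v k) ≠ 0 → g (x + v l) ≠ 0 → k = l := by
    intro x k l h1 h2
    have h1 := hgs _ h1
    have h2 := hgs _ h2
    have h3 : ‖v k - v l‖ < 1 := by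
      calc ‖v k - v l‖ = ‖(x + v k) - (x + v l)‖ := by congr 1; abel
        _ ≤ ‖x + v k‖ + ‖x + v l‖ := norm_sub_le _ _
        _ < 1 := by linarith
    have h4 : |(N k : ℝ) - N l| < 1 := by
      refine lt_of_le_of_lt ?_ h3
      have := PiLp.norm_apply_le (v k - v l) i0
      simpa [v] using this
    apply hN
    have h5 : |(N k : ℤ) - N l| < 1 := by exact_mod_cast h4
    rw [Int.abs_lt_one_iff] at h5
    omega
  have hcont : Continuous g := hg.continuous
  have hgL : eLpNorm g p volume < ⊤ := (hcont.memLp_of_hasCompactSupport hgc).2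
  have hlow : ∀ K : ℕ, ∀ ξ ∈ E, (K : ℝ) / 2 * c ≤ ‖𝓕 (trSum g v K) ξ‖ := by
    intro K ξ hξ
    rw [trSum_fourier g (hcont.integrable_of_hasCompactSupport hgc), norm_mul]
    have := exp_sum_lower (n := fun k => inner ℝ (v k) ξ) (by
      intro k
      obtain ⟨z, t, h⟩ := hE ξ hξ k
      refine ⟨z, t, ?_⟩
      simpa [v, EuclideanSpace.inner_single_left, mul_comm] using h) K
    have h2 := hgF ξ (hER ξ hξ)
    gcongr
  -- Schwartz
  have hS : ∀ K, ∃ f : SchwartzMap (EuclideanSpace ℝ (Fin d)) ℂ, ⇑f = trSum g v K := by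
    intro K
    have h1 : HasCompactSupport (trSum g v K) := by
      induction K with
      | zero =>
        have : trSum g v 0 = 0 := by funext x; simp [trSum]
        rw [this]; exact HasCompactSupport.zero
      | succ K ih =>
        have : trSum g v (K+1) = trSum g v K + g ∘ (Homeomorph.addRight (v K)) := by
          funext x; simp [trSum, Finset.sum_range_succ]
        rw [this]
        exact ih.add (hgc.comp_homeomorph _)
    have h2 : ContDiff ℝ (⊤ : ℕ∞) (trSum g v K) := by
      unfold trSum
      refine ContDiff.sum fun k _ => ?_
      exact hg.comp (contDiff_id.add contDiff_const)
    exact ⟨h1.toSchwartzMap h2, rfl⟩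
  set m : ℝ≥0∞ := eLpNorm (fun _ => (1:ℝ)) q (μ.restrict E) with hm
  have hm0 : m ≠ 0 := by
    rw [hm, Ne, eLpNorm_eq_zero_iff aestronglyMeasurable_const (by positivity)]
    intro hcon
    have : μ.restrict E = 0 := by
      rw [← ae_eq_bot]
      by_contra hne
      have : (ae (μ.restrict E)).NeBot := ⟨hne⟩
      obtain ⟨x, hx⟩ := hcon.exists
      simp at hx
    rw [Measure.restrict_eq_zero] at this
    exact hμ.ne' this
  have hmain : ∀ K : ℕ, ENNReal.ofReal ((K:ℝ) / 2 * c) * m ≤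
      C * ((K : ℝ≥0∞) ^ (1 / p.toReal) * eLpNorm g p volume) := by
    intro K
    obtain ⟨f, hf⟩ := hS K
    calc ENNReal.ofReal ((K:ℝ) / 2 * c) * m
        = eLpNorm (((K:ℝ) / 2 * c) • (fun _ => (1:ℝ))) q (μ.restrict E) := by
          rw [eLpNorm_const_smul, Real.enorm_of_nonneg (by positivity)]
      _ ≤ eLpNorm (𝓕 (trSum g v K)) q (μ.restrict E) := by
          refine eLpNorm_mono_ae ?_
          filter_upwards [ae_restrict_mem hEm] with ξ hξ
          have := hlow K ξ hξ
          have h0 : 0 ≤ (K:ℝ) / 2 * c := by positivity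
          simpa [abs_of_nonneg h0, abs_of_pos hc] using this
      _ ≤ eLpNorm (𝓕 (trSum g v K)) q μ := eLpNorm_mono_measure _ Measure.restrict_le_self
      _ ≤ C * eLpNorm (trSum g v K) p volume := by rw [← hf]; exact hC f
      _ ≤ _ := by
        gcongr
        exact trSum_eLpNorm g hcont v K hdisj p hp0 hpt
  set G : ℝ≥0∞ := C * eLpNorm g p volume with hG
  have hGt : G ≠ ⊤ := ENNReal.mul_ne_top (by simp) hgL.ne
  set a : ℝ := 1 - 1 / p.toReal with ha
  have ha0 : 0 < a := by
    have : 1 < p.toReal := by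
      have := (ENNReal.toReal_lt_toReal (by simp) hpt).2 hp
      simpa using this
    have := (div_lt_one (by linarith)).2 this
    linarith
  have hbound : ∀ K : ℕ, 1 ≤ K →
      ENNReal.ofReal (c / 2) * m ≤ G * ENNReal.ofReal ((K:ℝ) ^ (-a)) := by
    intro K hK
    have hK0 : (0:ℝ) < K := by exact_mod_cast hK
    calc ENNReal.ofReal (c / 2) * m = ENNReal.ofReal ((K:ℝ)⁻¹) *
          (ENNReal.ofReal ((K:ℝ) / 2 * c) * m) := by
          rw [← mul_assoc, ← ENNReal.ofReal_mul (by positivity)]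
          congr 2
          field_simp
      _ ≤ ENNReal.ofReal ((K:ℝ)⁻¹) *
          (C * ((K : ℝ≥0∞) ^ (1 / p.toReal) * eLpNorm g p volume)) := by
          exact mul_le_mul_right (hmain K) _
      _ = G * (ENNReal.ofReal ((K:ℝ)⁻¹) * ENNReal.ofReal ((K:ℝ) ^ (1 / p.toReal))) := by
          rw [← ENNReal.ofReal_natCast K, ENNReal.ofReal_rpow_of_pos hK0, hG]
          ring
      _ = G * ENNReal.ofReal ((K:ℝ) ^ (-a)) := by
          rw [← ENNReal.ofReal_mul (by positivity), ha, neg_sub, sub_eq_add_neg,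
            Real.rpow_add hK0, Real.rpow_neg_one, mul_comm (K:ℝ)⁻¹]
  have ht : Filter.Tendsto (fun K : ℕ => G * ENNReal.ofReal ((K:ℝ) ^ (-a))) Filter.atTop
      (nhds (G * ENNReal.ofReal 0)) :=
    ENNReal.Tendsto.const_mul (ENNReal.tendsto_ofReal
      ((tendsto_rpow_neg_atTop ha0).comp tendsto_natCast_atTop_atTop)) (Or.inr hGt)
  have hle := ge_of_tendsto ht (Filter.eventually_atTop.2 ⟨1, hbound⟩)
  rw [ENNReal.ofReal_zero, mul_zero, nonpos_iff_eq_zero, mul_eq_zero] at hle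
  rcases hle with h | h
  · rw [ENNReal.ofReal_eq_zero] at h; linarith
  · exact hm0 h

lemma ex_strictMono : StrictMono ex := by
  refine strictMono_nat_of_lt_succ fun k => ?_
  unfold ex
  nlinarith

/-- There exists a compact set `E ⊆ ℝ^d` of full Hausdorff dimension `d` such that for every
Borel measure `μ` with `μ(E) > 0`, every `p ∈ (1,2]` and every `q ∈ [1,∞]`, the supremum over
Schwartz functions of `‖f̂‖_{L^q(μ)} / ‖f‖_{L^p}` is infinite, i.e. no finite constant `C`
satisfies `‖f̂‖_{L^q(μ)} ≤ C ‖f‖_{L^p}` for all Schwartz `f`. -/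
theorem exists_compact_full_dim_no_restriction (d : ℕ) (hd : 0 < d) :
    ∃ E : Set (EuclideanSpace ℝ (Fin d)), IsCompact E ∧ dimH E = (d : ℝ≥0∞) ∧
      ∀ μ : Measure (EuclideanSpace ℝ (Fin d)), 0 < μ E →
        ∀ p q : ℝ≥0∞, 1 < p → p ≤ 2 → 1 ≤ q →
          ¬ ∃ C : ℝ≥0, ∀ f : SchwartzMap (EuclideanSpace ℝ (Fin d)) ℂ,
            eLpNorm (𝓕 ⇑f) q μ ≤ (C : ℝ≥0∞) * eLpNorm (⇑f) p volume := by
  let e : EuclideanSpace ℝ (Fin d) ≃L[ℝ] (Fin d → ℝ) := EuclideanSpace.equiv (Fin d) ℝ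
  have hc : IsCompact (e ⁻¹' EP d) := e.toHomeomorph.isCompact_preimage.2 (EP_compact d)
  refine ⟨e ⁻¹' EP d, hc, ?_, ?_⟩
  · rw [ContinuousLinearEquiv.dimH_preimage, EP_dim]
  · intro μ hμ p q hp hp2 hq
    obtain ⟨R, hR, hER⟩ := hc.isBounded.exists_pos_norm_le
    refine no_restriction ⟨0, hd⟩ _ hc.measurableSet R hR hER (fun k => 2 ^ ex k) ?_ ?_ μ hμ p q
      hp hp2 hq
    · intro k l hkl
      exact ex_strictMono.injective (Nat.pow_right_injective le_rfl hkl)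
    · intro ξ hξ k
      obtain ⟨a, ha⟩ := hξ ⟨0, hd⟩ trivial
      obtain ⟨z, t, h⟩ := AA_frac a k
      refine ⟨z, t, ?_⟩
      rw [ha] at h
      push_cast
      exact h
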